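/- arXiv:1707.06128 — 9 statements merged into one kernel-verified Lean document; each statement's English description precedes it below -/
import Mathlib

section
/- Define g₁(φ) = −2 + 2(φ−π)/tan φ. For every r > 0 and every φ with π < φ < 2π and φ ≠ 3π/2, ∫_0^{φ−π} (r·sin(φ−θ−π)/2)·(r·cos(φ−θ−π) − r·sin(φ−θ−π)/tan φ) dθ = −(r²/8)·g₁(φ). -/
/-! Reversing the direction variable, `u = φ - π - θ`, turns the integral into that of
`sin u * (cos u - cot φ * sin u)` over `[0, α]` with `α = φ - π`. Since `cot φ = cot α`, this is
`(sin² α - cot α * (α - sin α * cos α)) / 2`, and `cot α * sin α * cos α = cos² α` completes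
`sin² α` to `1`. -/

open Real

theorem cot_sub_pi (x : ℝ) : cot (x - π) = cot x := by
  rw [cot_eq_cos_div_sin, cos_sub_pi, sin_sub_pi, neg_div_neg_eq, cot_eq_cos_div_sin]

theorem div_tan_eq_mul_cot (x y : ℝ) : x / tan y = x * cot y := by
  rw [div_eq_mul_inv, tan_inv_eq_cot]

theorem sin_neg_of_pi_lt_of_lt_two_pi {x : ℝ} (hx : π < x) (hx' : x < 2 * π) : sin x < 0 := by
  rw [← sin_sub_two_pi]
  exact sin_neg_of_neg_of_neg_pi_lt (by linarith) (by linarith)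

theorem integral_sin_mul_cos_sub_const_mul_sin (a b k : ℝ) :
    ∫ u in a..b, sin u * (cos u - k * sin u) =
      (sin b ^ 2 - sin a ^ 2) / 2 - k * ((sin a * cos a - sin b * cos b + b - a) / 2) := by
  calc ∫ u in a..b, sin u * (cos u - k * sin u)
      = ∫ u in a..b, (sin u * cos u - k * sin u ^ 2) := by
        congr 1 with u
        ring
    _ = (∫ u in a..b, sin u * cos u) - k * ∫ u in a..b, sin u ^ 2 := by
        rw [intervalIntegral.integral_sub (Continuous.intervalIntegrable (by fun_prop) _ _)
          (Continuous.intervalIntegrable (by fun_prop) _ _), intervalIntegral.integral_const_mul]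
    _ = _ := by rw [integral_sin_mul_cos₁, integral_sin_sq]

theorem integral_sin_mul_cos_sub_cot_mul_sin {α : ℝ} (hα : sin α ≠ 0) :
    ∫ u in 0..α, sin u * (cos u - cot α * sin u) = (1 - α * cot α) / 2 := by
  have cot_mul_sin : cot α * sin α = cos α := by
    rw [cot_eq_cos_div_sin, div_mul_cancel₀ _ hα]
  rw [integral_sin_mul_cos_sub_const_mul_sin, sin_zero]
  linear_combination (cos α / 2) * cot_mul_sin + (1 / 2) * sin_sq_add_cos_sq α

/-- Here `cot φ` stands for `1 / tan φ`, and is its limiting value `0` where `cos φ = 0`. -/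
theorem overlap_integral_eq_g1_general (r φ : ℝ) (hφ : sin φ ≠ 0) :
    ∫ θ in 0..(φ - π),
        (r * sin (φ - θ - π) / 2) * (r * cos (φ - θ - π) - r * sin (φ - θ - π) * cot φ) =
      -(r ^ 2 / 8) * (-2 + 2 * (φ - π) * cot φ) := by
  have sin_sub_pi_ne_zero : sin (φ - π) ≠ 0 := by rwa [sin_sub_pi, neg_ne_zero]
  calc ∫ θ in 0..(φ - π),
        (r * sin (φ - θ - π) / 2) * (r * cos (φ - θ - π) - r * sin (φ - θ - π) * cot φ)
      = ∫ θ in 0..(φ - π), r ^ 2 / 2 *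
          (sin (φ - π - θ) * (cos (φ - π - θ) - cot (φ - π) * sin (φ - π - θ))) := by
        congr 1 with θ
        rw [sub_right_comm φ θ π, cot_sub_pi]
        ring
    _ = r ^ 2 / 2 * ∫ u in 0..(φ - π), sin u * (cos u - cot (φ - π) * sin u) := by
        rw [intervalIntegral.integral_const_mul, intervalIntegral.integral_comp_sub_left
          (fun u ↦ sin u * (cos u - cot (φ - π) * sin u)), sub_self, sub_zero]
    _ = r ^ 2 / 2 * ((1 - (φ - π) * cot φ) / 2) := by
        rw [integral_sin_mul_cos_sub_cot_mul_sin sin_sub_pi_ne_zero, cot_sub_pi]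
    _ = -(r ^ 2 / 8) * (-2 + 2 * (φ - π) * cot φ) := by ring

/-- With `g₁(φ) = −2 + 2(φ−π)/tan φ`, for every `r > 0` and every concave angle
`φ ∈ (π, 2π)`, `φ ≠ 3π/2`, the total overlap measure satisfies
`∫_0^{φ−π} (r sin(φ−θ−π)/2)(r cos(φ−θ−π) − r sin(φ−θ−π)/tan φ) dθ = −(r²/8) g₁(φ)`. -/
theorem overlap_integral_eq_g1 (r φ : ℝ) (hr : 0 < r)
    (h1 : π < φ) (h2 : φ < 2 * π) (h3 : φ ≠ 3 * π / 2) :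
    (∫ θ in (0:ℝ)..(φ - π),
        (r * Real.sin (φ - θ - π) / 2) *
          (r * Real.cos (φ - θ - π) - r * Real.sin (φ - θ - π) / Real.tan φ))
      = -(r ^ 2 / 8) * (-2 + 2 * (φ - π) / Real.tan φ) := by
  simpa only [div_tan_eq_mul_cot] using
    overlap_integral_eq_g1_general r φ (sin_neg_of_pi_lt_of_lt_two_pi h1 h2).ne
end

section
/- Let π < φ < 2π with φ ≠ 3π/2 and l > 0. Define ζ₁(φ,l,r) = φ − π + arcsin(l·sin φ / r) and Φ(φ,l,r) = −l·r + r²/4 − (3l/4)·√(r² − (l·sin φ)²)·cos φ + (3/4)·(l·sin φ)² − r²·ζ₁(φ,l,r)/(4·tan φ) − (l²·ζ₁(φ,l,r)/2)·sin φ·cos φ + (log(r/l))·(l·sin φ)²/2. Then for every r with l·|sin φ| < r, the function r ↦ Φ(φ,l,r) is differentiable at r with derivative −l + r/2 − (l·cos φ/(2r))·√(r² − (l·sin φ)²) + (l·sin φ)²/(2r) − (r/(2·tan φ))·(φ − π + arcsin(l·sin φ/r)). -/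
open Real

/-!
Put `a = l sin φ`, `W = √(r² - a²)` and `ζ = φ - π + arcsin (a / r)`. Since `l cos φ = a cot φ`,
every term of `Φ` containing `W` or `ζ` is a multiple of `l cos φ`, and together they contribute
`-l cos φ · G` with `G = 3W/4 + (r² + 2a²) ζ / (4a)`. As `W' = r/W` and `ζ' = -a/(rW)`, the
algebraic terms of `G'` combine to `(r² - a²)/(2rW) = W/(2r)`, so `G' = W/(2r) + rζ/(2a)`.
Written with `cot φ` instead of `1 / tan φ`, the formula has no singularity at `φ = 3π/2`.
-/

lemma hasDerivAt_sqrt_sq_sub_const {c r : ℝ} (h : r ^ 2 - c ≠ 0) :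
    HasDerivAt (fun x : ℝ => √(x ^ 2 - c)) (r / √(r ^ 2 - c)) r := by
  refine (((hasDerivAt_pow 2 r).sub_const c).sqrt h).congr_deriv ?_
  field_simp
  norm_num

lemma sqrt_one_sub_div_sq {r : ℝ} (hr : r ≠ 0) (a : ℝ) :
    √(1 - (a / r) ^ 2) = √(r ^ 2 - a ^ 2) / |r| := by
  rw [← sqrt_sq_eq_abs, ← sqrt_div' _ (sq_nonneg r)]
  congr 1
  field_simp

lemma hasDerivAt_arcsin_const_div {a r : ℝ} (h : |a| < |r|) :
    HasDerivAt (fun x : ℝ => arcsin (a / x)) (-(a / (|r| * √(r ^ 2 - a ^ 2)))) r := by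
  have hr : 0 < |r| := (abs_nonneg a).trans_lt h
  have hr0 : r ≠ 0 := abs_pos.mp hr
  have hlt : |a / r| < 1 := by rwa [abs_div, div_lt_one hr]
  have hdiv : HasDerivAt (fun x : ℝ => a / x) (-a / r ^ 2) r :=
    ((hasDerivAt_const r a).fun_div (hasDerivAt_id' r) hr0).congr_deriv (by ring)
  have harcsin := hasDerivAt_arcsin (abs_lt.mp hlt).1.ne' (abs_lt.mp hlt).2.ne
  refine (harcsin.comp r hdiv).congr_deriv ?_
  rw [sqrt_one_sub_div_sq hr0, ← sq_abs r]
  field_simp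

/-- The function `G` for which the square root and arcsine terms of `Φ` add up to `-l cos φ · G r`,
where `a` stands for `l sin φ` and `θ` for the constant part `φ - π` of the angle `ζ₁`.
It is meant for `a ≠ 0`. -/
noncomputable def angularFactor (a θ r : ℝ) : ℝ :=
  3 / 4 * √(r ^ 2 - a ^ 2) + (r ^ 2 + 2 * a ^ 2) / (4 * a) * (θ + arcsin (a / r))

lemma hasDerivAt_angularFactor {a r : ℝ} (ha : a ≠ 0) (har : |a| < r) (θ : ℝ) :
    HasDerivAt (angularFactor a θ)
      (√(r ^ 2 - a ^ 2) / (2 * r) + r / (2 * a) * (θ + arcsin (a / r))) r := by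
  have hr : 0 < r := (abs_nonneg a).trans_lt har
  have hrad : 0 < r ^ 2 - a ^ 2 := sub_pos.mpr (sq_lt_sq.mpr (har.trans_le (le_abs_self r)))
  have hW : 0 < √(r ^ 2 - a ^ 2) := sqrt_pos.mpr hrad
  have hWsq : √(r ^ 2 - a ^ 2) ^ 2 = r ^ 2 - a ^ 2 := sq_sqrt hrad.le
  have hsqrt := hasDerivAt_sqrt_sq_sub_const hrad.ne'
  have hangle := (hasDerivAt_arcsin_const_div (har.trans_le (le_abs_self r))).const_add θ
  have hcoeff := ((hasDerivAt_pow 2 r).add_const (2 * a ^ 2)).div_const (4 * a)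
  refine ((hsqrt.const_mul (3 / 4)).add (hcoeff.mul hangle)).congr_deriv ?_
  rw [abs_of_pos hr]
  generalize √(r ^ 2 - a ^ 2) = W at *
  field_simp
  linear_combination -4 * a * hWsq

theorem hasDerivAt_Phi_r_general {φ l r : ℝ} (hφ : sin φ ≠ 0) (hl : 0 < l)
    (hr : l * |sin φ| < r) :
    HasDerivAt (fun x : ℝ =>
        -(l * x) + x ^ 2 / 4
          - (3 * l / 4) * √(x ^ 2 - (l * sin φ) ^ 2) * cos φ
          + (3 / 4) * (l * sin φ) ^ 2
          - x ^ 2 * (φ - π + arcsin (l * sin φ / x)) / 4 * cot φ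
          - (l ^ 2 * (φ - π + arcsin (l * sin φ / x)) / 2) * sin φ * cos φ
          + log (x / l) * (l * sin φ) ^ 2 / 2)
      (-l + r / 2
        - (l * cos φ / (2 * r)) * √(r ^ 2 - (l * sin φ) ^ 2)
        + (l * sin φ) ^ 2 / (2 * r)
        - r / 2 * cot φ * (φ - π + arcsin (l * sin φ / r))) r := by
  have ha : |l * sin φ| < r := by rwa [abs_mul, abs_of_pos hl]
  have hr0 : 0 < r := (abs_nonneg _).trans_lt ha
  have hlin := (hasDerivAt_id' r).const_mul l
  have hsq := (hasDerivAt_pow 2 r).div_const 4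
  have hlog := ((hasDerivAt_id' r).div_const l).log (div_pos hr0 hl).ne'
  have hangular := hasDerivAt_angularFactor (mul_ne_zero hl.ne' hφ) ha (φ - π)
  have hsum := (((hlin.fun_neg.fun_add hsq).fun_add
    ((hlog.mul_const ((l * sin φ) ^ 2)).div_const 2)).add_const
    (3 / 4 * (l * sin φ) ^ 2)).fun_sub (hangular.const_mul (l * cos φ))
  rw [cot_eq_cos_div_sin]
  refine (hsum.congr_deriv ?_).congr_of_eventuallyEq (.of_forall fun x => ?_)
  · field_simp
    ring
  · simp only [angularFactor]
    field_simp
    ring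

/-- With `ζ₁(φ,l,r) = φ − π + arcsin(l sin φ / r)` and
`Φ(φ,l,r) = −l r + r²/4 − (3l/4)√(r² − (l sin φ)²) cos φ + (3/4)(l sin φ)²
 − r² ζ₁/(4 tan φ) − (l² ζ₁/2) sin φ cos φ + log(r/l)(l sin φ)²/2`,
for `π < φ < 2π`, `φ ≠ 3π/2`, `l > 0` and every `r > l·|sin φ|`, the function
`r ↦ Φ(φ,l,r)` is differentiable at `r` with the stated derivative. -/
theorem hasDerivAt_Phi_r (φ l : ℝ) (h1 : π < φ) (h2 : φ < 2 * π) (h3 : φ ≠ 3 * π / 2)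
    (hl : 0 < l) :
    ∀ r : ℝ, l * |Real.sin φ| < r →
      HasDerivAt (fun r : ℝ =>
          -(l * r) + r ^ 2 / 4
            - (3 * l / 4) * Real.sqrt (r ^ 2 - (l * Real.sin φ) ^ 2) * Real.cos φ
            + (3 / 4) * (l * Real.sin φ) ^ 2
            - r ^ 2 * (φ - π + Real.arcsin (l * Real.sin φ / r)) / (4 * Real.tan φ)
            - (l ^ 2 * (φ - π + Real.arcsin (l * Real.sin φ / r)) / 2) *
                Real.sin φ * Real.cos φ
            + Real.log (r / l) * (l * Real.sin φ) ^ 2 / 2)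
        (-l + r / 2
          - (l * Real.cos φ / (2 * r)) * Real.sqrt (r ^ 2 - (l * Real.sin φ) ^ 2)
          + (l * Real.sin φ) ^ 2 / (2 * r)
          - (r / (2 * Real.tan φ)) * (φ - π + Real.arcsin (l * Real.sin φ / r))) r := by
  intro r hr
  have hsin : sin φ < 0 := by
    rw [← sin_sub_two_pi]
    exact sin_neg_of_neg_of_neg_pi_lt (by linarith) (by linarith)
  simpa only [← tan_inv_eq_cot, div_eq_mul_inv, mul_inv, mul_assoc] using
    hasDerivAt_Phi_r_general hsin.ne hl hr
end

section
/- For every real φ, every l ≥ 0 and every r > 0 with l·|sin φ| ≤ r, one has −r + l·sin² φ − √(r² − (l·sin φ)²)·cos φ ≤ 0. -/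
open Real

/-! Put `a = l sin φ`. The vector `(a, √(r² − a²))` has norm `r` and `(sin φ, −cos φ)` is a unit
vector, so Cauchy–Schwarz bounds their inner product `l sin² φ − √(r² − a²) cos φ` by `r`. -/

theorem mul_sin_sub_mul_cos_le_sqrt (a b φ : ℝ) : a * sin φ - b * cos φ ≤ √(a ^ 2 + b ^ 2) := by
  refine le_sqrt_of_sq_le ?_
  calc (a * sin φ - b * cos φ) ^ 2
      ≤ (a * sin φ - b * cos φ) ^ 2 + (a * cos φ + b * sin φ) ^ 2 :=
        le_add_of_nonneg_right (sq_nonneg _)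
    _ = (a ^ 2 + b ^ 2) * (sin φ ^ 2 + cos φ ^ 2) := by ring
    _ = a ^ 2 + b ^ 2 := by rw [sin_sq_add_cos_sq, mul_one]

theorem mul_sin_sub_sqrt_mul_cos_le {a r : ℝ} (h : |a| ≤ r) (φ : ℝ) :
    a * sin φ - √(r ^ 2 - a ^ 2) * cos φ ≤ r := by
  have hr : 0 ≤ r := (abs_nonneg a).trans h
  have har : 0 ≤ r ^ 2 - a ^ 2 := sub_nonneg.2 (sq_le_sq.2 (h.trans (le_abs_self r)))
  calc a * sin φ - √(r ^ 2 - a ^ 2) * cos φ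
      ≤ √(a ^ 2 + √(r ^ 2 - a ^ 2) ^ 2) := mul_sin_sub_mul_cos_le_sqrt _ _ _
    _ = r := by rw [sq_sqrt har, add_sub_cancel, sqrt_sq hr]

theorem mixed_deriv_nonpos_general {φ l r : ℝ} (h : |l * sin φ| ≤ r) :
    -r + l * sin φ ^ 2 - √(r ^ 2 - (l * sin φ) ^ 2) * cos φ ≤ 0 := by
  linarith [mul_sin_sub_sqrt_mul_cos_le h φ]

/-- For every real `φ`, every `l ≥ 0` and every `r > 0` with `l·|sin φ| ≤ r`, one has
`−r + l sin² φ − √(r² − (l sin φ)²)·cos φ ≤ 0`. -/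
theorem mixed_deriv_nonpos (φ l r : ℝ) (hl : 0 ≤ l) (hr : 0 < r)
    (hlr : l * |Real.sin φ| ≤ r) :
    -r + l * Real.sin φ ^ 2
      - Real.sqrt (r ^ 2 - (l * Real.sin φ) ^ 2) * Real.cos φ ≤ 0 :=
  mixed_deriv_nonpos_general (by rwa [abs_mul, abs_of_nonneg hl])
end

section
/- For every y with −1 < y < 0 and all l, r with 0 < l ≤ r, one has (r²·y − 2·l²·y³)·√(1−y²) + l·y·(2y²−1)·√(r² − (l·y)²) + r²·(arcsin(l·y/r) − arcsin y) ≥ 0. -/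
open Real

/-! With `a = arcsin y` and `b = arcsin (l y / r)`, the double-angle formulas collapse the
expression to `r² ((b - a) - sin (2 (b - a)) / 2)`. Since `a ≤ b`, this is nonnegative because
`sin t ≤ t` for `t ≥ 0`. -/

lemma sin_two_mul_arcsin (x : ℝ) : sin (2 * arcsin x) = 2 * (x * √(1 - x ^ 2)) := by
  rw [sin_two_mul, cos_arcsin]
  -- Outside `[-1, 1]` the square root is `0`, which makes `sin (arcsin x) ≠ x` harmless.
  rcases le_total (x ^ 2) 1 with hx | hx
  · obtain ⟨hx₁, hx₂⟩ := abs_le.1 ((sq_le_one_iff_abs_le_one x).1 hx)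
    rw [sin_arcsin hx₁ hx₂, mul_assoc]
  · simp only [sqrt_eq_zero_of_nonpos (sub_nonpos.2 hx), mul_zero]

lemma cos_two_mul_arcsin {x : ℝ} (hx : x ∈ Set.Icc (-1) 1) :
    cos (2 * arcsin x) = 1 - 2 * x ^ 2 := by
  rw [cos_two_mul_eq_one_sub, sin_arcsin hx.1 hx.2]

lemma sin_two_mul_arcsin_sub_arcsin {x y : ℝ} (hx : x ∈ Set.Icc (-1) 1)
    (hy : y ∈ Set.Icc (-1) 1) :
    sin (2 * (arcsin x - arcsin y)) =
      2 * (x * √(1 - x ^ 2) * (1 - 2 * y ^ 2) - (1 - 2 * x ^ 2) * (y * √(1 - y ^ 2))) := by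
  rw [mul_sub, sin_sub, sin_two_mul_arcsin, sin_two_mul_arcsin, cos_two_mul_arcsin hx,
    cos_two_mul_arcsin hy]
  ring

lemma sqrt_sq_sub_sq_eq_mul_sqrt {r : ℝ} (hr : 0 < r) (x : ℝ) :
    √(r ^ 2 - x ^ 2) = r * √(1 - (x / r) ^ 2) := by
  have h : r ^ 2 - x ^ 2 = r ^ 2 * (1 - (x / r) ^ 2) := by field_simp
  rw [h, sqrt_mul (sq_nonneg r), sqrt_sq hr.le]

lemma mixed_deriv_phi_r_eq {y l r : ℝ} (hr : 0 < r) (hy : y ∈ Set.Icc (-1) 1)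
    (hz : l * y / r ∈ Set.Icc (-1) 1) :
    (r ^ 2 * y - 2 * l ^ 2 * y ^ 3) * √(1 - y ^ 2)
        + l * y * (2 * y ^ 2 - 1) * √(r ^ 2 - (l * y) ^ 2)
        + r ^ 2 * (arcsin (l * y / r) - arcsin y) =
      r ^ 2 * ((arcsin (l * y / r) - arcsin y)
        - sin (2 * (arcsin (l * y / r) - arcsin y)) / 2) := by
  rw [sin_two_mul_arcsin_sub_arcsin hz hy, sqrt_sq_sub_sq_eq_mul_sqrt hr]
  field_simp
  ring

theorem mixed_deriv_phi_r_nonneg_case1_general {y l r : ℝ} (hr : 0 < r) (hy : -1 ≤ y)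
    (hyz : y ≤ l * y / r) (hz : l * y / r ≤ 1) :
    0 ≤ (r ^ 2 * y - 2 * l ^ 2 * y ^ 3) * √(1 - y ^ 2)
        + l * y * (2 * y ^ 2 - 1) * √(r ^ 2 - (l * y) ^ 2)
        + r ^ 2 * (arcsin (l * y / r) - arcsin y) := by
  rw [mixed_deriv_phi_r_eq hr ⟨hy, hyz.trans hz⟩ ⟨hy.trans hyz, hz⟩]
  have hθ : 0 ≤ arcsin (l * y / r) - arcsin y := sub_nonneg.2 (arcsin_le_arcsin hyz)
  have hsin := sin_le (mul_nonneg zero_le_two hθ)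
  exact mul_nonneg (sq_nonneg r) (by linarith)

/-- For every `y ∈ (−1, 0)` and all `0 < l ≤ r`, one has
`(r²y − 2l²y³)√(1−y²) + l y (2y²−1)√(r² − (ly)²) + r²(arcsin(ly/r) − arcsin y) ≥ 0`. -/
theorem mixed_deriv_phi_r_nonneg_case1 (y l r : ℝ)
    (hy1 : -1 < y) (hy2 : y < 0) (hl : 0 < l) (hlr : l ≤ r) :
    0 ≤ (r ^ 2 * y - 2 * l ^ 2 * y ^ 3) * Real.sqrt (1 - y ^ 2)
        + l * y * (2 * y ^ 2 - 1) * Real.sqrt (r ^ 2 - (l * y) ^ 2)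
        + r ^ 2 * (Real.arcsin (l * y / r) - Real.arcsin y) := by
  have hr : 0 < r := hl.trans_le hlr
  exact mixed_deriv_phi_r_nonneg_case1_general hr hy1.le
    ((le_div_iff₀' hr).2 (mul_le_mul_of_nonpos_right hlr hy2.le))
    ((div_le_one hr).2 ((mul_neg_of_pos_of_neg hl hy2).trans hr).le)
end

section
/- For every y with −1 < y < 0 and all l, r with 0 < l ≤ r, one has y·√(1−y²)·(1 − l·√(1−y²)/√(r² − (l·y)²)) + arcsin(l·y/r) − arcsin y ≥ 0. -/
/-!
Put `θ = arcsin y` and `φ = arcsin (l * y / r)`, so that `r * sin φ = l * sin θ` (Snell's law).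
The expression then collapses to `(φ - θ) - (cos θ / cos φ) * sin (φ - θ)`, which is nonnegative
because `θ ≤ φ` and `0 < cos θ ≤ cos φ`.
-/

open Real

lemma cos_arcsin_pos {x : ℝ} (hx₁ : -1 < x) (hx₂ : x < 1) : 0 < cos (arcsin x) :=
  cos_pos_of_mem_Ioo ⟨neg_pi_div_two_lt_arcsin.2 hx₁, arcsin_lt_pi_div_two.2 hx₂⟩

lemma cos_arcsin_le_cos_arcsin_of_abs_le {x y : ℝ} (h : |x| ≤ |y|) :
    cos (arcsin y) ≤ cos (arcsin x) := by
  rw [cos_arcsin, cos_arcsin]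
  exact sqrt_le_sqrt (sub_le_sub_left (sq_le_sq.2 h) 1)

lemma sqrt_sq_sub_sq_eq_mul_cos_arcsin {r : ℝ} (hr : 0 < r) (a : ℝ) :
    √(r ^ 2 - a ^ 2) = r * cos (arcsin (a / r)) := by
  have hfactor : r ^ 2 - a ^ 2 = r ^ 2 * (1 - (a / r) ^ 2) := by field_simp
  rw [hfactor, sqrt_mul (sq_nonneg r), sqrt_sq hr.le, cos_arcsin]

lemma cos_div_cos_mul_sin_sub_le {θ φ : ℝ} (hθφ : θ ≤ φ) (hθ : 0 ≤ cos θ)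
    (hcos : cos θ ≤ cos φ) : cos θ / cos φ * sin (φ - θ) ≤ φ - θ := by
  have hsub : 0 ≤ φ - θ := sub_nonneg.2 hθφ
  calc cos θ / cos φ * sin (φ - θ) ≤ cos θ / cos φ * (φ - θ) :=
        mul_le_mul_of_nonneg_left (sin_le hsub) (div_nonneg hθ (hθ.trans hcos))
    _ ≤ φ - θ := mul_le_of_le_one_left hsub (div_le_one_of_le₀ hcos (hθ.trans hcos))

lemma sin_mul_cos_mul_one_sub_eq {θ φ l r : ℝ} (hr : r ≠ 0) (hφ : cos φ ≠ 0)
    (hsin : r * sin φ = l * sin θ) :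
    sin θ * cos θ * (1 - l * cos θ / (r * cos φ)) = -(cos θ / cos φ * sin (φ - θ)) := by
  rw [sin_sub]
  field_simp
  linear_combination cos θ ^ 2 * hsin

theorem g_nonneg_general {y l r : ℝ} (hy₁ : -1 < y) (hy₂ : y ≤ 0) (hr : 0 < r) (hlr : |l| ≤ r) :
    0 ≤ y * √(1 - y ^ 2) * (1 - l * √(1 - y ^ 2) / √(r ^ 2 - (l * y) ^ 2))
        + arcsin (l * y / r) - arcsin y := by
  have habs : |l * y / r| ≤ |y| := by
    rw [abs_div, abs_mul, abs_of_pos hr, div_le_iff₀ hr, mul_comm]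
    exact mul_le_mul_of_nonneg_left hlr (abs_nonneg y)
  obtain ⟨hyz, hzy⟩ : y ≤ l * y / r ∧ l * y / r ≤ -y := by
    simpa only [abs_of_nonpos hy₂, neg_neg] using abs_le.1 habs
  have hcos_pos : 0 < cos (arcsin y) := cos_arcsin_pos hy₁ (by linarith)
  have hcos_le : cos (arcsin y) ≤ cos (arcsin (l * y / r)) :=
    cos_arcsin_le_cos_arcsin_of_abs_le habs
  have hsin_y : sin (arcsin y) = y := sin_arcsin hy₁.le (by linarith)
  have hsnell : r * sin (arcsin (l * y / r)) = l * sin (arcsin y) := by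
    rw [sin_arcsin (by linarith) (by linarith), hsin_y, mul_div_cancel₀ _ hr.ne']
  have hcollapse := sin_mul_cos_mul_one_sub_eq hr.ne' (hcos_pos.trans_le hcos_le).ne' hsnell
  rw [hsin_y] at hcollapse
  rw [sqrt_sq_sub_sq_eq_mul_cos_arcsin hr, ← cos_arcsin y, hcollapse]
  linarith [cos_div_cos_mul_sin_sub_le (monotone_arcsin hyz) hcos_pos.le hcos_le]

/-- For every `y ∈ (−1, 0)` and all `0 < l ≤ r`, one has
`y√(1−y²)(1 − l√(1−y²)/√(r² − (ly)²)) + arcsin(ly/r) − arcsin y ≥ 0`. -/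
theorem g_nonneg (y l r : ℝ) (hy1 : -1 < y) (hy2 : y < 0) (hl : 0 < l) (hlr : l ≤ r) :
    0 ≤ y * Real.sqrt (1 - y ^ 2) *
          (1 - l * Real.sqrt (1 - y ^ 2) / Real.sqrt (r ^ 2 - (l * y) ^ 2))
        + Real.arcsin (l * y / r) - Real.arcsin y :=
  g_nonneg_general hy1 hy2.le (hl.trans_le hlr) ((abs_of_pos hl).trans_le hlr)
end

section
/- For every z with 0 < z < 1 and all l, r with 0 < l, 0 < r and l·z ≤ r, one has (r²·z − 2·l²·z³)·√(1−z²) + r·l·z·(1−2z²)·√(1 − (l·z/r)²) + r²·(arccos z + arccos(l·z/r)) ≥ 0. -/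
/-!
Put `s = arccos z + arccos (l z / r)`. The double-angle and addition formulas turn the expression
into `r² (s - sin (2 s) / 2)`. Since `s ≥ 0`, nonnegativity is the inequality `sin x ≤ x` at
`x = 2 s`.
-/

open Real

theorem sin_two_mul_arccos_add_arccos {x y : ℝ} (hx : |x| ≤ 1) (hy : |y| ≤ 1) :
    sin (2 * (arccos x + arccos y)) =
      2 * (x * (2 * y ^ 2 - 1) * √(1 - x ^ 2) + y * (2 * x ^ 2 - 1) * √(1 - y ^ 2)) := by
  obtain ⟨hx₁, hx₂⟩ := abs_le.mp hx
  obtain ⟨hy₁, hy₂⟩ := abs_le.mp hy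
  rw [mul_add, sin_add, sin_two_mul, sin_two_mul, cos_two_mul, cos_two_mul,
    cos_arccos hx₁ hx₂, cos_arccos hy₁ hy₂, sin_arccos, sin_arccos]
  ring

theorem mixed_deriv_phi_r_eq_sq_mul_sub_sin {z l r : ℝ} (hz : |z| ≤ 1) (hr : r ≠ 0)
    (hlzr : |l * z / r| ≤ 1) :
    (r ^ 2 * z - 2 * l ^ 2 * z ^ 3) * √(1 - z ^ 2)
        + r * l * z * (1 - 2 * z ^ 2) * √(1 - (l * z / r) ^ 2)
        + r ^ 2 * (arccos z + arccos (l * z / r)) =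
      r ^ 2 * (arccos z + arccos (l * z / r)
        - sin (2 * (arccos z + arccos (l * z / r))) / 2) := by
  have coeff_z : r ^ 2 * z - 2 * l ^ 2 * z ^ 3 = r ^ 2 * (z * (1 - 2 * (l * z / r) ^ 2)) := by
    field_simp
  have coeff_lzr : r * l * z * (1 - 2 * z ^ 2) = r ^ 2 * (l * z / r * (1 - 2 * z ^ 2)) := by
    field_simp
  rw [sin_two_mul_arccos_add_arccos hz hlzr, coeff_z, coeff_lzr]
  ring

theorem mixed_deriv_phi_r_nonneg_case2_general {z l r : ℝ} (hz : |z| ≤ 1) (hr : r ≠ 0)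
    (hlzr : |l * z / r| ≤ 1) :
    0 ≤ (r ^ 2 * z - 2 * l ^ 2 * z ^ 3) * √(1 - z ^ 2)
        + r * l * z * (1 - 2 * z ^ 2) * √(1 - (l * z / r) ^ 2)
        + r ^ 2 * (arccos z + arccos (l * z / r)) := by
  rw [mixed_deriv_phi_r_eq_sq_mul_sub_sin hz hr hlzr]
  have angle_nonneg : 0 ≤ arccos z + arccos (l * z / r) :=
    add_nonneg (arccos_nonneg _) (arccos_nonneg _)
  have sin_le_angle := sin_le (mul_nonneg zero_le_two angle_nonneg)
  exact mul_nonneg (sq_nonneg r) (by linarith)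

/-- For every `z ∈ (0, 1)` and all `l > 0`, `r > 0` with `l·z ≤ r`, one has
`(r²z − 2l²z³)√(1−z²) + r l z (1−2z²)√(1 − (lz/r)²) + r²(arccos z + arccos(lz/r)) ≥ 0`. -/
theorem mixed_deriv_phi_r_nonneg_case2 (z l r : ℝ)
    (hz1 : 0 < z) (hz2 : z < 1) (hl : 0 < l) (hr : 0 < r) (hlr : l * z ≤ r) :
    0 ≤ (r ^ 2 * z - 2 * l ^ 2 * z ^ 3) * Real.sqrt (1 - z ^ 2)
        + r * l * z * (1 - 2 * z ^ 2) * Real.sqrt (1 - (l * z / r) ^ 2)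
        + r ^ 2 * (Real.arccos z + Real.arccos (l * z / r)) := by
  have hlzr : |l * z / r| ≤ 1 := by rwa [abs_of_nonneg (by positivity), div_le_one hr]
  exact mixed_deriv_phi_r_nonneg_case2_general (abs_le.2 ⟨by linarith, hz2.le⟩) hr.ne' hlzr
end

section
/- For every z with 0 < z < 1 and all l ≥ 0, r > 0 with l·z ≤ r, one has r²·arccos z + (r²·z − 2·l²·z³)·√(1−z²) ≥ 0. -/
open Real

theorem sqrt_one_sub_sq_le_arccos (z : ℝ) : √(1 - z ^ 2) ≤ arccos z :=
  sin_arccos z ▸ sin_le (arccos_nonneg z)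

section OrderedRing

variable {R : Type*} [CommRing R] [LinearOrder R] [IsStrictOrderedRing R]

theorem abs_sub_two_mul_le {a b : R} (hb : 0 ≤ b) (hba : b ≤ a) : |a - 2 * b| ≤ a :=
  abs_le.mpr ⟨by linarith, by linarith⟩

theorem abs_sq_mul_sub_two_mul_sq_mul_cube_le {l r z : R} (h : |l * z| ≤ |r|) :
    |r ^ 2 * z - 2 * l ^ 2 * z ^ 3| ≤ r ^ 2 * |z| :=
  calc |r ^ 2 * z - 2 * l ^ 2 * z ^ 3|
      = |r ^ 2 - 2 * (l * z) ^ 2| * |z| := by rw [← abs_mul]; ring_nf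
    _ ≤ r ^ 2 * |z| := by
      gcongr
      exact abs_sub_two_mul_le (sq_nonneg _) (sq_le_sq.mpr h)

end OrderedRing

theorem arccos_bound_one_general {z l r : ℝ} (hz : |z| ≤ 1) (hlr : |l * z| ≤ |r|) :
    0 ≤ r ^ 2 * arccos z + (r ^ 2 * z - 2 * l ^ 2 * z ^ 3) * √(1 - z ^ 2) := by
  have hcoef : -r ^ 2 ≤ r ^ 2 * z - 2 * l ^ 2 * z ^ 3 := by
    refine neg_le_of_abs_le ((abs_sq_mul_sub_two_mul_sq_mul_cube_le hlr).trans ?_)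
    exact mul_le_of_le_one_right (sq_nonneg r) hz
  calc 0 = r ^ 2 * √(1 - z ^ 2) + -r ^ 2 * √(1 - z ^ 2) := by ring
    _ ≤ r ^ 2 * arccos z + (r ^ 2 * z - 2 * l ^ 2 * z ^ 3) * √(1 - z ^ 2) := by
      gcongr
      exact sqrt_one_sub_sq_le_arccos z

/-- For every `z ∈ (0, 1)` and all `l ≥ 0`, `r > 0` with `l·z ≤ r`, one has
`r² arccos z + (r²z − 2l²z³)√(1−z²) ≥ 0`. -/
theorem arccos_bound_one (z l r : ℝ)
    (hz1 : 0 < z) (hz2 : z < 1) (hl : 0 ≤ l) (hr : 0 < r) (hlr : l * z ≤ r) :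
    0 ≤ r ^ 2 * Real.arccos z
        + (r ^ 2 * z - 2 * l ^ 2 * z ^ 3) * Real.sqrt (1 - z ^ 2) :=
  arccos_bound_one_general (abs_le.mpr ⟨by linarith, hz2.le⟩)
    (abs_le_abs_of_nonneg (mul_nonneg hl hz1.le) hlr)
end

section
/- For every φ with π < φ ≤ 3π/2 and all l, r with 0 < l ≤ r, one has r + √(r² − (l·sin φ)²)·cos φ − l·(1 + log(r/l))·sin² φ + l·(φ − π + arcsin(l·sin φ/r))·sin φ·cos φ ≥ 0. -/
open Real

/-!
Fix `φ` and `l`, and let `r` vary. With `ψ = arcsin (l sin φ / r)`, so that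
`r sin ψ = l sin φ` and `r cos ψ = √(r² − (l sin φ)²)`, the derivative of the expression in `r`
collapses to `1 + cos φ cos ψ − sin φ sin ψ = 1 + cos (φ + ψ) ≥ 0`. The expression is therefore
smallest at `r = l`. There `ψ = π − φ` and the square root is `−l cos φ`, so its value is
`l (1 − cos² φ − sin² φ) = 0`.
-/

/-- The derivative in the edge length `l` of the overlap measure `Ψ(l) = g₄(l, φ, r)`, in closed
form, for the angle `φ` and the range `r`. The range is the last argument, since it is the variable
in which the function is studied. -/
noncomputable def psiDeriv (φ l r : ℝ) : ℝ :=
  r + √(r ^ 2 - (l * sin φ) ^ 2) * cos φ - l * (1 + log (r / l)) * sin φ ^ 2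
    + l * (φ - π + arcsin (l * sin φ / r)) * sin φ * cos φ

section ArcsinDiv

variable {a r : ℝ}

lemma cos_arcsin_div (hr : 0 < r) : cos (arcsin (a / r)) = √(r ^ 2 - a ^ 2) / r := by
  rw [cos_arcsin, show 1 - (a / r) ^ 2 = (r ^ 2 - a ^ 2) / r ^ 2 by field_simp,
    sqrt_div' _ (sq_nonneg r), sqrt_sq hr.le]

lemma hasDerivAt_arcsin_div (har : |a| < r) :
    HasDerivAt (fun y ↦ arcsin (a / y)) (-a / (r * √(r ^ 2 - a ^ 2))) r := by
  have hr : 0 < r := (abs_nonneg a).trans_lt har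
  have hdiv : |a / r| < 1 := by rwa [abs_div, abs_of_pos hr, div_lt_one hr]
  have hinner : HasDerivAt (fun y ↦ a / y) (-a / r ^ 2) r := by
    simpa using (hasDerivAt_const r a).fun_div (hasDerivAt_id r) hr.ne'
  have hcomp := (hasDerivAt_arcsin (abs_lt.1 hdiv).1.ne' (abs_lt.1 hdiv).2.ne).comp r hinner
  refine hcomp.congr_deriv ?_
  rw [← cos_arcsin, cos_arcsin_div hr]
  field_simp

lemma hasDerivAt_sqrt_sq_sub_sq (har : r ^ 2 - a ^ 2 ≠ 0) :
    HasDerivAt (fun y ↦ √(y ^ 2 - a ^ 2)) (r / √(r ^ 2 - a ^ 2)) r :=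
  (((hasDerivAt_pow 2 r).sub_const (a ^ 2)).sqrt har).congr_deriv (by field_simp; simp)

end ArcsinDiv

section PsiDeriv

variable {φ l r : ℝ}

lemma psiDeriv_self (hφ₁ : π / 2 ≤ φ) (hφ₂ : φ ≤ 3 * π / 2) (hl : 0 < l) :
    psiDeriv φ l l = 0 := by
  have hcos : cos φ ≤ 0 := cos_nonpos_of_pi_div_two_le_of_le hφ₁ (by linarith)
  have hsqrt : √(l ^ 2 - (l * sin φ) ^ 2) = l * -cos φ := by
    rw [← sqrt_sq (mul_nonneg hl.le (neg_nonneg.2 hcos))]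
    congr 1
    linear_combination -l ^ 2 * sin_sq_add_cos_sq φ
  have harcsin : arcsin (sin φ) = π - φ := by
    rw [← sin_pi_sub, arcsin_sin (by linarith) (by linarith)]
  rw [psiDeriv, hsqrt, div_self hl.ne', log_one, mul_div_cancel_left₀ _ hl.ne', harcsin]
  linear_combination -l * sin_sq_add_cos_sq φ

lemma hasDerivAt_psiDeriv (hl : l ≠ 0) (hr : |l * sin φ| < r) :
    HasDerivAt (psiDeriv φ l) (1 + cos (φ + arcsin (l * sin φ / r))) r := by
  have hr₀ : 0 < r := (abs_nonneg _).trans_lt hr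
  have hpos : 0 < r ^ 2 - (l * sin φ) ^ 2 := sub_pos.2 (sq_lt_sq.2 (hr.trans_le (le_abs_self r)))
  have hsqrt₀ : √(r ^ 2 - (l * sin φ) ^ 2) ≠ 0 := (sqrt_pos.2 hpos).ne'
  have hsq : √(r ^ 2 - (l * sin φ) ^ 2) ^ 2 = r ^ 2 - (l * sin φ) ^ 2 := sq_sqrt hpos.le
  have hsin : sin (arcsin (l * sin φ / r)) = l * sin φ / r := by
    have hdiv : |l * sin φ / r| ≤ 1 := by
      rw [abs_div, abs_of_pos hr₀]
      exact div_le_one_of_le₀ hr.le hr₀.le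
    exact sin_arcsin (abs_le.1 hdiv).1 (abs_le.1 hdiv).2
  have hlog : HasDerivAt (fun y ↦ log (y / l)) (1 / r) r :=
    (((hasDerivAt_id r).div_const l).log (div_ne_zero hr₀.ne' hl)).congr_deriv
      (by simp only [id_eq]; field_simp)
  have hderiv := (((hasDerivAt_id r).add
    ((hasDerivAt_sqrt_sq_sub_sq hpos.ne').mul_const (cos φ))).sub
    (((hlog.const_add 1).const_mul l).mul_const (sin φ ^ 2))).add
    (((((hasDerivAt_arcsin_div hr).const_add (φ - π)).const_mul l).mul_const (sin φ)).mul_const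
      (cos φ))
  refine hderiv.congr_deriv ?_
  rw [cos_add, hsin, cos_arcsin_div hr₀]
  generalize √(r ^ 2 - (l * sin φ) ^ 2) = q at hsqrt₀ hsq ⊢
  field_simp
  linear_combination -cos φ * hsq

lemma continuousOn_psiDeriv (φ : ℝ) (hl : l ≠ 0) : ContinuousOn (psiDeriv φ l) {0}ᶜ := by
  have hlog : ContinuousOn (fun y ↦ log (y / l)) {0}ᶜ :=
    (continuousOn_id.div_const l).log fun _ hy ↦ div_ne_zero hy hl
  have harcsin : ContinuousOn (fun y ↦ arcsin (l * sin φ / y)) {0}ᶜ :=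
    continuous_arcsin.comp_continuousOn (continuousOn_const.div continuousOn_id fun _ hy ↦ hy)
  unfold psiDeriv
  fun_prop

lemma monotoneOn_psiDeriv (φ : ℝ) (hl : 0 < l) : MonotoneOn (psiDeriv φ l) (Set.Ici l) := by
  have hcont : ContinuousOn (psiDeriv φ l) (Set.Ici l) :=
    (continuousOn_psiDeriv φ hl.ne').mono fun _ hy ↦ (hl.trans_le hy).ne'
  have hsin : |l * sin φ| ≤ l := by
    rw [abs_mul, abs_of_pos hl]
    exact mul_le_of_le_one_right hl.le (abs_sin_le_one φ)
  have hderiv : ∀ y ∈ interior (Set.Ici l), HasDerivWithinAt (psiDeriv φ l)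
      (1 + cos (φ + arcsin (l * sin φ / y))) (interior (Set.Ici l)) y := fun y hy ↦ by
    rw [interior_Ici] at hy
    exact (hasDerivAt_psiDeriv hl.ne' (hsin.trans_lt hy)).hasDerivWithinAt
  exact monotoneOn_of_hasDerivWithinAt_nonneg (convex_Ici l) hcont hderiv
    fun y _ ↦ neg_le_iff_add_nonneg'.1 (neg_one_le_cos _)

theorem Psi_deriv_nonneg_case1_general (hφ₁ : π / 2 ≤ φ) (hφ₂ : φ ≤ 3 * π / 2)
    (hl : 0 < l) (hlr : l ≤ r) : 0 ≤ psiDeriv φ l r :=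
  calc
    0 = psiDeriv φ l l := (psiDeriv_self hφ₁ hφ₂ hl).symm
    _ ≤ psiDeriv φ l r := monotoneOn_psiDeriv φ hl Set.self_mem_Ici hlr hlr

end PsiDeriv

/-- For every concave angle `φ ∈ (π, 3π/2]` and all `0 < l ≤ r`, one has
`r + √(r² − (l sin φ)²) cos φ − l(1 + log(r/l)) sin² φ
  + l(φ − π + arcsin(l sin φ/r)) sin φ cos φ ≥ 0`. -/
theorem Psi_deriv_nonneg_case1 (φ l r : ℝ)
    (h1 : π < φ) (h2 : φ ≤ 3 * π / 2) (hl : 0 < l) (hlr : l ≤ r) :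
    0 ≤ r + Real.sqrt (r ^ 2 - (l * Real.sin φ) ^ 2) * Real.cos φ
        - l * (1 + Real.log (r / l)) * Real.sin φ ^ 2
        + l * (φ - π + Real.arcsin (l * Real.sin φ / r)) * Real.sin φ * Real.cos φ :=
  Psi_deriv_nonneg_case1_general (by linarith [pi_pos]) h2 hl hlr
end

section
/- For every z with 0 < z < 1 and all l, r with 0 < l, 0 < r and l·z ≤ r, one has r + √(r² − (l·z)²)·√(1−z²) − l·z²·(1 + log(r/l)) + l·z·√(1−z²)·(arccos z + arccos(l·z/r)) ≥ 0. -/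
open Real

/-!
Every term except `-l z² (1 + log (r / l))` is nonnegative. The tangent line of `log` at `1`,
evaluated at `r / l`, gives `l (1 + log (r / l)) ≤ r`, so the exceptional term costs at most
`r z²`, which the leading `r` absorbs.
-/

theorem mul_one_add_log_div_le {x y : ℝ} (hx : 0 < x) (hy : 0 < y) :
    x * (1 + Real.log (y / x)) ≤ y := by
  have tangent : Real.log (y / x) ≤ y / x - 1 := Real.log_le_sub_one_of_pos (div_pos hy hx)
  calc x * (1 + Real.log (y / x)) ≤ x * (y / x) := by gcongr; linarith
    _ = y := mul_div_cancel₀ y hx.ne'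

/-- For every `z ∈ (0, 1)` and all `l > 0`, `r > 0` with `l·z ≤ r`, one has
`r + √(r² − (lz)²)√(1−z²) − l z²(1 + log(r/l)) + l z √(1−z²)(arccos z + arccos(lz/r)) ≥ 0`. -/
theorem Psi_deriv_nonneg_case2 (z l r : ℝ)
    (hz1 : 0 < z) (hz2 : z < 1) (hl : 0 < l) (hr : 0 < r) (hlr : l * z ≤ r) :
    0 ≤ r + Real.sqrt (r ^ 2 - (l * z) ^ 2) * Real.sqrt (1 - z ^ 2)
        - l * z ^ 2 * (1 + Real.log (r / l))
        + l * z * Real.sqrt (1 - z ^ 2) *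
            (Real.arccos z + Real.arccos (l * z / r)) := by
  have log_term_le : l * z ^ 2 * (1 + Real.log (r / l)) ≤ r :=
    calc l * z ^ 2 * (1 + Real.log (r / l)) = z ^ 2 * (l * (1 + Real.log (r / l))) := by ring
      _ ≤ z ^ 2 * r := by gcongr; exact mul_one_add_log_div_le hl hr
      _ ≤ r := mul_le_of_le_one_left hr.le (pow_le_one₀ hz1.le hz2.le)
  have sqrt_term_nonneg :
      0 ≤ Real.sqrt (r ^ 2 - (l * z) ^ 2) * Real.sqrt (1 - z ^ 2) := by positivity
  have arccos_term_nonneg :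
      0 ≤ l * z * Real.sqrt (1 - z ^ 2) * (Real.arccos z + Real.arccos (l * z / r)) :=
    mul_nonneg (by positivity) (add_nonneg (Real.arccos_nonneg z) (Real.arccos_nonneg _))
  linarith
end
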